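/- Let C be a finite nonempty set, let p : C → ℝ be a probability mass function, and define N_eff = (Σ_{c∈C} p(c)²)⁻¹. Let (Ω, 𝔽, P) be a probability space, let E be a finite-dimensional real inner product space, fix θ ∈ E, η > 0, and let û : Ω → E be a measurable random vector with ‖û(ω)‖ = 1 for all ω; set θ⁺(ω) = θ − η·û(ω). For each c ∈ C let F_c : E → ℝ be differentiable with L-Lipschitz gradient and with ‖∇F_c(θ)‖ ≤ G, where L, G ≥ 0, and write Δ_c(ω) = F_c(θ⁺(ω)) − F_c(θ). Let S ⊆ C with |S| ≤ m for some real m > 0, let κ > 0 and ρ ∈ (0,1], and assume: (i) for every c ∈ C \ S, P(Δ_c ≥ κ) ≥ ρ; (ii) for every c ∈ S, E[Δ_c] ≥ 0; (iii) ρ·κ − (1 − ρ)·(η·G + L·η²/2) ≥ 0; and (iv) each Δ_c is measurable. Then, with a := √(m / N_eff), the mixture loss F_r(θ') := Σ_{c∈C} p(c)·F_c(θ') satisfies E[F_r(θ⁺) − F_r(θ)] ≥ max(0, 1 − a) · (ρ·κ − (1 − ρ)·(η·G + L·η²/2)). -/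

import Mathlib

open Finset Real MeasureTheory

/-!
With `B = η * G + L * η ^ 2 / 2`, the first-order Taylor estimate gives `|Δ c| ≤ B`. An unprotected
composition, whose `Δ c` reaches `κ` with probability at least `ρ` and is never below `-B`, thus has
expected increment at least `ρ * κ - (1 - ρ) * B`, by Markov's inequality for `Δ c + B`. Protected
compositions contribute nonnegatively, and by Cauchy-Schwarz they carry mass at most
`√(m * ∑ c, p c ^ 2) = a`, which leaves mass at least `1 - a` for the unprotected ones.
-/

section Taylor

variable {E F : Type*} [NormedAddCommGroup E] [NormedSpace ℝ E] [NormedAddCommGroup F]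
  [NormedSpace ℝ F] {f : E → F} {f' : E → E →L[ℝ] F} {s : Set E} {x y : E} {L : ℝ}

theorem norm_image_sub_le_of_norm_hasFDerivWithin_le_mul_norm_sub
    (hf : ∀ z ∈ s, HasFDerivWithinAt f (f' z) s z) (hbound : ∀ z ∈ s, ‖f' z‖ ≤ L * ‖z - x‖)
    (hs : Convex ℝ s) (hx : x ∈ s) (hy : y ∈ s) : ‖f y - f x‖ ≤ L * ‖y - x‖ ^ 2 / 2 := by
  let γ : ℝ → E := AffineMap.lineMap x y
  have hγ : Set.MapsTo γ (Set.Icc 0 1) s := hs.mapsTo_lineMap hx hy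
  have hderiv (t : ℝ) (ht : t ∈ Set.Icc (0 : ℝ) 1) :
      HasDerivWithinAt (fun t ↦ f (γ t) - f x) (f' (γ t) (y - x)) (Set.Icc 0 1) t :=
    ((hf _ (hγ ht)).comp_hasDerivWithinAt t AffineMap.hasDerivWithinAt_lineMap hγ).sub_const (f x)
  have hquad (t : ℝ) :
      HasDerivAt (fun t ↦ L * ‖y - x‖ ^ 2 / 2 * t ^ 2) (L * ‖y - x‖ ^ 2 * t) t := by
    refine ((hasDerivAt_pow 2 t).const_mul (L * ‖y - x‖ ^ 2 / 2)).congr_deriv ?_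
    push_cast
    ring
  have hspeed (t : ℝ) (ht : t ∈ Set.Ico (0 : ℝ) 1) :
      ‖f' (γ t) (y - x)‖ ≤ L * ‖y - x‖ ^ 2 * t := by
    have hdist : ‖γ t - x‖ = t * ‖y - x‖ := by
      rw [← dist_eq_norm, dist_lineMap_left, Real.norm_of_nonneg ht.1, dist_eq_norm_sub']
    calc ‖f' (γ t) (y - x)‖ ≤ L * ‖γ t - x‖ * ‖y - x‖ :=
          (f' (γ t)).le_of_opNorm_le (hbound _ (hγ (Set.Ico_subset_Icc_self ht))) _
      _ = L * ‖y - x‖ ^ 2 * t := by rw [hdist]; ring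
  simpa [γ] using image_norm_le_of_norm_deriv_right_le_deriv_boundary
    (fun t ht ↦ (hderiv t ht).continuousWithinAt)
    (fun t ht ↦ (hderiv t (Set.Ico_subset_Icc_self ht)).mono_of_mem_nhdsWithin
      (Icc_mem_nhdsGE_of_mem ht))
    (by simp [γ]) hquad hspeed (Set.right_mem_Icc.2 zero_le_one)

theorem norm_image_sub_sub_le_of_lipschitz_hasFDerivWithin
    (hf : ∀ z ∈ s, HasFDerivWithinAt f (f' z) s z) (hlip : ∀ z ∈ s, ‖f' z - f' x‖ ≤ L * ‖z - x‖)
    (hs : Convex ℝ s) (hx : x ∈ s) (hy : y ∈ s) :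
    ‖f y - f x - f' x (y - x)‖ ≤ L * ‖y - x‖ ^ 2 / 2 := by
  have h := norm_image_sub_le_of_norm_hasFDerivWithin_le_mul_norm_sub
    (fun z hz ↦ (hf z hz).sub (f' x).hasFDerivWithinAt) hlip hs hx hy
  rwa [Pi.sub_apply, Pi.sub_apply, sub_sub_sub_comm, ← map_sub] at h

theorem norm_image_sub_le_of_lipschitz_hasFDerivWithin
    (hf : ∀ z ∈ s, HasFDerivWithinAt f (f' z) s z) (hlip : ∀ z ∈ s, ‖f' z - f' x‖ ≤ L * ‖z - x‖)
    (hs : Convex ℝ s) (hx : x ∈ s) (hy : y ∈ s) :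
    ‖f y - f x‖ ≤ ‖f' x‖ * ‖y - x‖ + L * ‖y - x‖ ^ 2 / 2 :=
  calc ‖f y - f x‖ ≤ ‖f' x (y - x)‖ + ‖f y - f x - f' x (y - x)‖ :=
        norm_le_norm_add_norm_sub' _ _
    _ ≤ ‖f' x‖ * ‖y - x‖ + L * ‖y - x‖ ^ 2 / 2 := by
        gcongr
        · exact (f' x).le_opNorm _
        · exact norm_image_sub_sub_le_of_lipschitz_hasFDerivWithin hf hlip hs hx hy

theorem norm_image_sub_le_of_lipschitz_hasFDerivWithin_closedBall {r G : ℝ}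
    (hf : ∀ z ∈ Metric.closedBall x r, HasFDerivWithinAt f (f' z) (Metric.closedBall x r) z)
    (hL : 0 ≤ L) (hlip : ∀ z ∈ Metric.closedBall x r, ‖f' z - f' x‖ ≤ L * ‖z - x‖)
    (hG : ‖f' x‖ ≤ G) (hy : y ∈ Metric.closedBall x r) :
    ‖f y - f x‖ ≤ r * G + L * r ^ 2 / 2 := by
  have hdist : ‖y - x‖ ≤ r := mem_closedBall_iff_norm.1 hy
  have hr : 0 ≤ r := (norm_nonneg _).trans hdist
  have hG₀ : 0 ≤ G := (norm_nonneg _).trans hG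
  calc ‖f y - f x‖ ≤ ‖f' x‖ * ‖y - x‖ + L * ‖y - x‖ ^ 2 / 2 :=
        norm_image_sub_le_of_lipschitz_hasFDerivWithin hf hlip (convex_closedBall x r)
          (Metric.mem_closedBall_self hr) hy
    _ ≤ G * r + L * r ^ 2 / 2 := by gcongr
    _ = r * G + L * r ^ 2 / 2 := by rw [mul_comm G]

end Taylor

theorem mul_add_one_sub_mul_le_integral_of_le_measureReal {Ω : Type*} [MeasurableSpace Ω]
    {P : Measure Ω} [IsProbabilityMeasure P] {X : Ω → ℝ} (hX : Integrable X P) {b κ ρ : ℝ}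
    (hb : ∀ᵐ ω ∂P, b ≤ X ω) (hρ : 0 ≤ ρ) (htail : ρ ≤ P.real {ω | κ ≤ X ω}) :
    ρ * κ + (1 - ρ) * b ≤ ∫ ω, X ω ∂P := by
  have hnonneg : 0 ≤ᵐ[P] fun ω ↦ X ω - b := hb.mono fun ω ↦ sub_nonneg.2
  have hmarkov : (κ - b) * P.real {ω | κ ≤ X ω} ≤ ∫ ω, X ω - b ∂P := by
    simpa only [sub_le_sub_iff_right] using
      mul_meas_ge_le_integral_of_nonneg hnonneg (hX.sub (integrable_const b)) (κ - b)
  have hexcess : (κ - b) * ρ ≤ ∫ ω, X ω - b ∂P := by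
    rcases le_total b κ with hbκ | hκb
    · exact (mul_le_mul_of_nonneg_left htail (sub_nonneg.2 hbκ)).trans hmarkov
    · exact (mul_nonpos_of_nonpos_of_nonneg (sub_nonpos.2 hκb) hρ).trans
        (integral_nonneg_of_ae hnonneg)
  rw [integral_sub hX (integrable_const b), integral_const, probReal_univ, one_smul] at hexcess
  linarith

section Mixture

variable {C : Type*} [Fintype C]

/-- The effective composition number of weights `p`: the reciprocal of their collision probability,
equal to `n` for the uniform distribution on `n` compositions. -/
noncomputable def effectiveNumber (p : C → ℝ) : ℝ := (∑ c, p c ^ 2)⁻¹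

theorem sum_le_sqrt_div_effectiveNumber (p : C → ℝ) {S : Finset C} {m : ℝ} (hS : (#S : ℝ) ≤ m) :
    ∑ c ∈ S, p c ≤ √(m / effectiveNumber p) := by
  have hm : 0 ≤ m := (Nat.cast_nonneg _).trans hS
  refine Real.le_sqrt_of_sq_le ?_
  calc (∑ c ∈ S, p c) ^ 2 ≤ #S * ∑ c ∈ S, p c ^ 2 := sq_sum_le_card_mul_sum_sq
    _ ≤ m * ∑ c, p c ^ 2 := by
        gcongr
        exact subset_univ S
    _ = m / effectiveNumber p := by rw [effectiveNumber, div_inv_eq_mul]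

theorem max_zero_one_sub_sqrt_le_sum_compl [DecidableEq C] {p : C → ℝ} (hp : ∀ c, 0 ≤ p c)
    (hsum : ∑ c, p c = 1) {S : Finset C} {m : ℝ} (hS : (#S : ℝ) ≤ m) :
    max 0 (1 - √(m / effectiveNumber p)) ≤ ∑ c ∈ Sᶜ, p c := by
  refine max_le (sum_nonneg fun c _ ↦ hp c) ?_
  linarith [sum_add_sum_compl S p, sum_le_sqrt_div_effectiveNumber p hS]

theorem sum_compl_mul_le_sum_mul [DecidableEq C] {R : Type*} [Semiring R] [PartialOrder R]
    [IsOrderedRing R] {p x : C → R} {b : R} {S : Finset C} (hp : ∀ c, 0 ≤ p c)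
    (hS : ∀ c ∈ S, 0 ≤ x c) (hb : ∀ c ∈ Sᶜ, b ≤ x c) :
    (∑ c ∈ Sᶜ, p c) * b ≤ ∑ c, p c * x c :=
  calc (∑ c ∈ Sᶜ, p c) * b = ∑ c ∈ Sᶜ, p c * b := sum_mul ..
    _ ≤ ∑ c ∈ Sᶜ, p c * x c := sum_le_sum fun c hc ↦ mul_le_mul_of_nonneg_left (hb c hc) (hp c)
    _ ≤ ∑ c ∈ S, p c * x c + ∑ c ∈ Sᶜ, p c * x c :=
        le_add_of_nonneg_left (sum_nonneg fun c hc ↦ mul_nonneg (hp c) (hS c hc))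
    _ = ∑ c, p c * x c := sum_add_sum_compl S _

theorem integral_sum_mul_sub_sum_mul {Ω : Type*} [MeasurableSpace Ω] {P : Measure Ω} (p y : C → ℝ)
    {X : C → Ω → ℝ} (hX : ∀ c, Integrable (fun ω ↦ X c ω - y c) P) :
    ∫ ω, (∑ c, p c * X c ω - ∑ c, p c * y c) ∂P = ∑ c, p c * ∫ ω, (X c ω - y c) ∂P := by
  simp_rw [← sum_sub_distrib, ← mul_sub, ← integral_const_mul]
  exact integral_finsetSum _ fun c _ ↦ (hX c).const_mul (p c)

end Mixture

theorem composition_mixing_increases_forgetting_general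
    {C : Type*} [Fintype C] [DecidableEq C] {p : C → ℝ} (hp : ∀ c, 0 ≤ p c) (hsum : ∑ c, p c = 1)
    {Ω : Type*} [MeasurableSpace Ω] {P : Measure Ω} [IsProbabilityMeasure P]
    {E : Type*} [NormedAddCommGroup E] [NormedSpace ℝ E]
    {θ : E} {η : ℝ} {θ' : Ω → E} (hθ' : ∀ᵐ ω ∂P, θ' ω ∈ Metric.closedBall θ η)
    {F : C → E → ℝ} {F' : C → E → E →L[ℝ] ℝ} {L G : ℝ} (hL : 0 ≤ L)
    (hF : ∀ c, ∀ x ∈ Metric.closedBall θ η,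
      HasFDerivWithinAt (F c) (F' c x) (Metric.closedBall θ η) x)
    (hlip : ∀ c, ∀ x ∈ Metric.closedBall θ η, ‖F' c x - F' c θ‖ ≤ L * ‖x - θ‖)
    (hG : ∀ c, ‖F' c θ‖ ≤ G)
    {S : Finset C} {m : ℝ} (hS : (#S : ℝ) ≤ m) {κ ρ : ℝ} (hρ : 0 ≤ ρ)
    (htail : ∀ c ∈ Sᶜ, ρ ≤ P.real {ω | κ ≤ F c (θ' ω) - F c θ})
    (hprotected : ∀ c ∈ S, 0 ≤ ∫ ω, (F c (θ' ω) - F c θ) ∂P)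
    (hsign : 0 ≤ ρ * κ - (1 - ρ) * (η * G + L * η ^ 2 / 2))
    (hmeas : ∀ c, AEStronglyMeasurable (fun ω ↦ F c (θ' ω) - F c θ) P) :
    max 0 (1 - √(m / effectiveNumber p)) * (ρ * κ - (1 - ρ) * (η * G + L * η ^ 2 / 2)) ≤
      ∫ ω, (∑ c, p c * F c (θ' ω) - ∑ c, p c * F c θ) ∂P := by
  set B := η * G + L * η ^ 2 / 2
  have hbound (c : C) : ∀ᵐ ω ∂P, ‖F c (θ' ω) - F c θ‖ ≤ B := hθ'.mono fun ω ↦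
    norm_image_sub_le_of_lipschitz_hasFDerivWithin_closedBall (hF c) hL (hlip c) (hG c)
  have hint (c : C) : Integrable (fun ω ↦ F c (θ' ω) - F c θ) P :=
    .of_bound (hmeas c) B (hbound c)
  have hoff (c : C) (hc : c ∈ Sᶜ) : ρ * κ - (1 - ρ) * B ≤ ∫ ω, (F c (θ' ω) - F c θ) ∂P := by
    simpa only [mul_neg, ← sub_eq_add_neg] using
      mul_add_one_sub_mul_le_integral_of_le_measureReal (hint c)
        ((hbound c).mono fun ω ↦ neg_le_of_abs_le) hρ (htail c hc)
  calc _ ≤ (∑ c ∈ Sᶜ, p c) * (ρ * κ - (1 - ρ) * B) :=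
        mul_le_mul_of_nonneg_right (max_zero_one_sub_sqrt_le_sum_compl hp hsum hS) hsign
    _ ≤ ∑ c, p c * ∫ ω, (F c (θ' ω) - F c θ) ∂P := sum_compl_mul_le_sum_mul hp hprotected hoff
    _ = _ := (integral_sum_mul_sub_sum_mul p _ hint).symm

/-- **Theorem 1 (composition mixing increases forgetting susceptibility).**
Let `p` be a probability mass function on a finite nonempty set `C` with effective
composition number `N_eff = (∑ c, p c ^ 2)⁻¹`.  Let `û` be a measurable random unit
vector on a probability space, `θ⁺ = θ − η • û`, and for each composition `c` let
`F_c` be differentiable with `L`-Lipschitz gradient and `‖∇F_c(θ)‖ ≤ G`; write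
`Δ_c = F_c(θ⁺) − F_c(θ)`.  If `S ⊆ C` with `|S| ≤ m`, each off-`S` composition
satisfies the tail bound `P(Δ_c ≥ κ) ≥ ρ`, each `c ∈ S` satisfies `E[Δ_c] ≥ 0`,
and `ρκ − (1−ρ)(ηG + Lη²/2) ≥ 0`, then with `a = √(m / N_eff)` the mixture loss
`F_r(θ') = ∑ c, p c • F_c(θ')` satisfies
`E[F_r(θ⁺) − F_r(θ)] ≥ (1 − a)₊ (ρκ − (1−ρ)(ηG + Lη²/2))`. -/
theorem composition_mixing_increases_forgetting
    {C : Type*} [Fintype C] [DecidableEq C] [Nonempty C]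
    (p : C → ℝ) (hp : ∀ c, 0 ≤ p c) (hsum : ∑ c, p c = 1)
    (Neff : ℝ) (hNeff : Neff = (∑ c, p c ^ 2)⁻¹)
    {Ω : Type*} [MeasurableSpace Ω] (P : Measure Ω) [IsProbabilityMeasure P]
    {E : Type*} [NormedAddCommGroup E] [InnerProductSpace ℝ E]
    [FiniteDimensional ℝ E] [MeasurableSpace E] [BorelSpace E]
    (θ : E) (η : ℝ) (hη : 0 < η)
    (u : Ω → E) (hu_meas : Measurable u) (hu_norm : ∀ ω, ‖u ω‖ = 1)
    (F : C → E → ℝ) (L G : ℝ) (hL : 0 ≤ L) (hG : 0 ≤ G)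
    (hF_diff : ∀ c, Differentiable ℝ (F c))
    (hF_lip : ∀ c, ∀ θ₁ θ₂ : E, ‖gradient (F c) θ₁ - gradient (F c) θ₂‖ ≤ L * ‖θ₁ - θ₂‖)
    (hF_grad : ∀ c, ‖gradient (F c) θ‖ ≤ G)
    (Δ : C → Ω → ℝ) (hΔ : ∀ c ω, Δ c ω = F c (θ - η • u ω) - F c θ)
    (S : Finset C) (m : ℝ) (hm : 0 < m) (hS : (S.card : ℝ) ≤ m)
    (κ ρ : ℝ) (hκ : 0 < κ) (hρ0 : 0 < ρ) (hρ1 : ρ ≤ 1)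
    (htail : ∀ c ∈ Sᶜ, ENNReal.ofReal ρ ≤ P {ω | κ ≤ Δ c ω})
    (hprotected : ∀ c ∈ S, 0 ≤ ∫ ω, Δ c ω ∂P)
    (hsign : 0 ≤ ρ * κ - (1 - ρ) * (η * G + L * η ^ 2 / 2))
    (hΔ_meas : ∀ c, Measurable (Δ c))
    (a : ℝ) (ha : a = Real.sqrt (m / Neff)) :
    max 0 (1 - a) * (ρ * κ - (1 - ρ) * (η * G + L * η ^ 2 / 2)) ≤
      ∫ ω, ((∑ c, p c * F c (θ - η • u ω)) - ∑ c, p c * F c θ) ∂P := by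
  obtain rfl : Δ = fun c ω ↦ F c (θ - η • u ω) - F c θ := funext₂ hΔ
  subst hNeff ha
  exact composition_mixing_increases_forgetting_general hp hsum
    (.of_forall fun ω ↦ by simp [hu_norm, norm_smul, abs_of_pos hη]) hL
    (fun c x _ ↦ (hF_diff c x).hasGradientAt.hasFDerivAt.hasFDerivWithinAt)
    (fun c x _ ↦ by simpa only [← map_sub, LinearIsometryEquiv.norm_map] using hF_lip c x θ)
    (fun c ↦ by simpa only [LinearIsometryEquiv.norm_map] using hF_grad c) hS hρ0.le
    (fun c hc ↦ (ENNReal.ofReal_le_iff_le_toReal (measure_ne_top _ _)).1 (htail c hc))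
    hprotected hsign fun c ↦ (hΔ_meas c).aestronglyMeasurable
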